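/- There exists a constant C > 0 such that for all sufficiently large real x, writing y = log log x, one has Σ_{p ≤ x, p prime} h_y(p−1) ≤ C · π(x)/(y · log y) and Σ_{p ≤ x, p prime} h_y(p+1) ≤ C · π(x)/(y · log y). -/

import Mathlib

open Filter Topology

/-- `hy y n` is the sum of `1/r` over the prime divisors `r` of `n` with `r > y`. -/
noncomputable def hy (y : ℝ) (n : ℕ) : ℝ :=
  ∑ r ∈ n.primeFactors.filter (fun r : ℕ => y < (r : ℝ)), (1 : ℝ) / r

/-! Interchanging the summations, `∑ h_y(p - a)` becomes the sum over primes `r > y` of `1/r` times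
the number of primes `p ≤ x` with `p ≡ a (mod r)`. For `r ≤ √x` that number is `≪ x / (r log x)` by
Selberg's sieve, and for larger `r` it is trivially `≪ x / r`. Since `∑_{r > y} 1/r² ≪ 1/(y log y)`
by Chebyshev's bound, the first range gives the main term and the second a negligible one.

The sieve is run through Ramanujan sums `c_e`. For `e ≤ z` coprime to `q` they are nearly orthogonal
on a residue class modulo `q`, while `c_e(m) = μ(e)` whenever `m` has no prime factor up to `z`.
Hence `∑ μ(e) c_e(m) / φ(e)` is the constant `S = ∑ μ(e)² / φ(e)` on the sifted set, and its mean
square over the class is about `S`, so that the sifted set has density at most about `1/S`. -/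

open Finset ArithmeticFunction
open scoped ArithmeticFunction.Moebius ArithmeticFunction.sigma

/-- The part of the residue class `a` modulo `q` in the interval `(u, u + N]`: the set to be
sifted. -/
def residueInterval {q : ℕ} (a : ZMod q) (u N : ℕ) : Finset ℕ :=
  {m ∈ Ioc u (u + N) | (m : ZMod q) = a}

/-- Ramanujan's sum `c_e(m)`, given by Kluyver's formula instead of by additive characters. -/
def ramanujanSum (e m : ℕ) : ℤ :=
  ∑ d ∈ e.divisors, μ (e / d) * if d ∣ m then (d : ℤ) else 0

theorem abs_card_residueInterval_sub_le {q : ℕ} [NeZero q] (a : ZMod q) (u N : ℕ) :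
    |(#(residueInterval a u N) : ℝ) - (N : ℝ) / q| ≤ 1 := by
  have hcard : (#(residueInterval a u N) : ℤ) =
      ⌊(((u + N : ℕ) : ℚ) - a.val) / q⌋ - ⌊((u : ℚ) - a.val) / q⌋ := by
    have hmono : ⌊((u : ℚ) - a.val) / q⌋ ≤ ⌊(((u + N : ℕ) : ℚ) - a.val) / q⌋ := by
      gcongr
      lia
    have hclass (m : ℕ) : (m : ZMod q) = a ↔ m ≡ a.val [MOD q] := by
      rw [← ZMod.natCast_eq_natCast_iff, ZMod.natCast_zmod_val]
    simp only [residueInterval, hclass]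
    rw [Nat.Ioc_filter_modEq_card _ _ (NeZero.pos q), max_eq_left (by linarith)]
  have hlen : (((u + N : ℕ) : ℚ) - a.val) / q - ((u : ℚ) - a.val) / q = N / q := by
    push_cast
    ring
  have hQ : |((#(residueInterval a u N) : ℤ) : ℚ) - N / q| ≤ 1 := by
    rw [hcard, Int.cast_sub, ← hlen, abs_le]
    constructor <;>
      linarith [Int.floor_le ((((u + N : ℕ) : ℚ) - a.val) / q),
        Int.lt_floor_add_one ((((u + N : ℕ) : ℚ) - a.val) / q),
        Int.floor_le (((u : ℚ) - a.val) / q), Int.lt_floor_add_one (((u : ℚ) - a.val) / q)]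
  have hR := (Rat.cast_le (K := ℝ)).mpr hQ
  push_cast at hR
  exact hR

theorem filter_dvd_residueInterval {d q : ℕ} (h : d.Coprime q) (a : ZMod q) (u N : ℕ) :
    {m ∈ residueInterval a u N | d ∣ m} =
      residueInterval ((ZMod.chineseRemainder h).symm (0, a)) u N := by
  ext m
  have hcrt : (m : ZMod (d * q)) = (ZMod.chineseRemainder h).symm (0, a) ↔
      (m : ZMod q) = a ∧ d ∣ m := by
    rw [RingEquiv.eq_symm_apply, map_natCast, Prod.ext_iff, Prod.fst_natCast, Prod.snd_natCast,
      ZMod.natCast_eq_zero_iff, and_comm]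
  simp only [residueInterval, mem_filter, hcrt, and_assoc]

theorem abs_card_filter_dvd_residueInterval_sub_le {d q : ℕ} [NeZero d] [NeZero q]
    (h : d.Coprime q) (a : ZMod q) (u N : ℕ) :
    |(#{m ∈ residueInterval a u N | d ∣ m} : ℝ) - (N : ℝ) / q / d| ≤ 1 := by
  rw [filter_dvd_residueInterval h, div_div, mul_comm (q : ℝ), ← Nat.cast_mul]
  exact abs_card_residueInterval_sub_le _ u N

theorem sum_divisors_moebius_mul_ite_dvd {e n : ℕ} (hn : n ≠ 0) :
    ∑ d ∈ n.divisors, μ (n / d) * (if e ∣ d then 1 else 0) = if n = e then 1 else 0 := by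
  rw [← Nat.sum_divisorsAntidiagonal' fun k d ↦ μ k * if e ∣ d then 1 else 0]
  refine sum_eq_iff_sum_mul_moebius_eq (R := ℤ) (f := fun d ↦ if d = e then 1 else 0)
    (g := fun d ↦ if e ∣ d then 1 else 0) |>.mp (fun k hk ↦ ?_) n (Nat.pos_of_ne_zero hn)
  simp [Nat.mem_divisors, hk.ne']

theorem sum_divisors_moebius_mul_gcd {e : ℕ} (he : e ≠ 0) (m : ℕ) :
    ∑ d ∈ e.divisors, μ (e / d) * (d.gcd m : ℤ) = if e ∣ m then (e.totient : ℤ) else 0 := by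
  rw [← Nat.sum_divisorsAntidiagonal' fun k d ↦ μ k * (d.gcd m : ℤ)]
  refine sum_eq_iff_sum_mul_moebius_eq (R := ℤ) (f := fun d ↦ if d ∣ m then (d.totient : ℤ) else 0)
    (g := fun d ↦ (d.gcd m : ℤ)) |>.mp (fun k hk ↦ ?_) e (Nat.pos_of_ne_zero he)
  have hdiv : {d ∈ k.divisors | d ∣ m} = (k.gcd m).divisors := by
    ext d
    simp [Nat.dvd_gcd_iff, hk.ne']
  rw [← sum_filter, hdiv]
  exact_mod_cast Nat.sum_totient (k.gcd m)

theorem sum_divisors_sum_divisors_moebius_mul_gcd {e₁ e₂ : ℕ} (h₁ : e₁ ≠ 0) (h₂ : e₂ ≠ 0) :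
    ∑ d₁ ∈ e₁.divisors, ∑ d₂ ∈ e₂.divisors, μ (e₁ / d₁) * μ (e₂ / d₂) * (d₁.gcd d₂ : ℤ) =
      if e₁ = e₂ then (e₁.totient : ℤ) else 0 := by
  calc
    _ = ∑ d₁ ∈ e₁.divisors, μ (e₁ / d₁) * ∑ d₂ ∈ e₂.divisors, μ (e₂ / d₂) * (d₂.gcd d₁ : ℤ) := by
      simp only [mul_sum, mul_assoc, Nat.gcd_comm]
    _ = e₂.totient * ∑ d₁ ∈ e₁.divisors, μ (e₁ / d₁) * (if e₂ ∣ d₁ then 1 else 0) := by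
      simp only [sum_divisors_moebius_mul_gcd h₂, mul_sum]
      refine sum_congr rfl fun d₁ _ ↦ ?_
      split_ifs <;> ring
    _ = _ := by
      rw [sum_divisors_moebius_mul_ite_dvd h₁]
      split_ifs with h <;> simp [h]

theorem ramanujanSum_eq_moebius_of_coprime {e m : ℕ} (h : e.Coprime m) :
    ramanujanSum e m = μ e := by
  rcases eq_or_ne e 0 with rfl | he
  · simp [ramanujanSum]
  rw [ramanujanSum, sum_eq_single_of_mem 1 (by simpa using he)]
  · simp
  · intro d hd hd1
    have hdm : ¬ d ∣ m := fun hdm ↦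
      hd1 (Nat.eq_one_of_dvd_coprimes h (Nat.dvd_of_mem_divisors hd) hdm)
    rw [if_neg hdm, mul_zero]

theorem sum_ramanujanSum_mul_ramanujanSum (A : Finset ℕ) (e₁ e₂ : ℕ) :
    ∑ m ∈ A, ramanujanSum e₁ m * ramanujanSum e₂ m =
      ∑ d₁ ∈ e₁.divisors, ∑ d₂ ∈ e₂.divisors,
        μ (e₁ / d₁) * μ (e₂ / d₂) * (d₁ * d₂ : ℤ) * #{m ∈ A | d₁.lcm d₂ ∣ m} := by
  simp only [ramanujanSum, sum_mul_sum]
  rw [sum_comm]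
  refine sum_congr rfl fun d₁ _ ↦ ?_
  rw [sum_comm]
  refine sum_congr rfl fun d₂ _ ↦ ?_
  rw [card_filter, Nat.cast_sum, mul_sum]
  refine sum_congr rfl fun m _ ↦ ?_
  by_cases hd₁ : d₁ ∣ m <;> by_cases hd₂ : d₂ ∣ m <;>
    simp [Nat.lcm_dvd_iff, hd₁, hd₂, mul_mul_mul_comm]

theorem sum_divisors_sum_divisors_moebius_mul_div_lcm {e₁ e₂ : ℕ} (h₁ : e₁ ≠ 0) (h₂ : e₂ ≠ 0) :
    ∑ d₁ ∈ e₁.divisors, ∑ d₂ ∈ e₂.divisors,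
      (μ (e₁ / d₁) * μ (e₂ / d₂) : ℝ) * (d₁ * d₂) / (d₁.lcm d₂) =
      if e₁ = e₂ then (e₁.totient : ℝ) else 0 := by
  have hgcd := congrArg (Int.cast (R := ℝ)) (sum_divisors_sum_divisors_moebius_mul_gcd h₁ h₂)
  push_cast at hgcd
  rw [← hgcd]
  refine sum_congr rfl fun d₁ hd₁ ↦ sum_congr rfl fun d₂ hd₂ ↦ ?_
  have hlcm : (d₁.lcm d₂ : ℝ) ≠ 0 := by
    exact_mod_cast (Nat.lcm_pos (Nat.pos_of_mem_divisors hd₁) (Nat.pos_of_mem_divisors hd₂)).ne'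
  have hmul : (d₁.gcd d₂ : ℝ) * d₁.lcm d₂ = d₁ * d₂ := by exact_mod_cast Nat.gcd_mul_lcm d₁ d₂
  rw [← hmul]
  field_simp

theorem abs_sum_ramanujanSum_mul_sub_le {q e₁ e₂ : ℕ} [NeZero q] (a : ZMod q) (u N : ℕ)
    (he₁ : e₁ ≠ 0) (he₂ : e₂ ≠ 0) (h₁ : e₁.Coprime q) (h₂ : e₂.Coprime q) :
    |∑ m ∈ residueInterval a u N, (ramanujanSum e₁ m * ramanujanSum e₂ m : ℝ) -
      (N : ℝ) / q * if e₁ = e₂ then (e₁.totient : ℝ) else 0| ≤ σ 1 e₁ * σ 1 e₂ := by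
  have hexpand := congrArg (Int.cast (R := ℝ))
    (sum_ramanujanSum_mul_ramanujanSum (residueInterval a u N) e₁ e₂)
  push_cast at hexpand
  have hμ (k : ℕ) : |(μ k : ℝ)| ≤ 1 := by exact_mod_cast abs_moebius_le_one (n := k)
  rw [hexpand, ← sum_divisors_sum_divisors_moebius_mul_div_lcm he₁ he₂, sigma_one_apply,
    sigma_one_apply, Nat.cast_sum, Nat.cast_sum, sum_mul_sum]
  simp only [mul_sum, ← sum_sub_distrib]
  refine (abs_sum_le_sum_abs _ _).trans (sum_le_sum fun d₁ hd₁ ↦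
    (abs_sum_le_sum_abs _ _).trans (sum_le_sum fun d₂ hd₂ ↦ ?_))
  have : NeZero (d₁.lcm d₂) :=
    ⟨(Nat.lcm_pos (Nat.pos_of_mem_divisors hd₁) (Nat.pos_of_mem_divisors hd₂)).ne'⟩
  have hcop : (d₁.lcm d₂).Coprime q := Nat.Coprime.coprime_dvd_left (Nat.lcm_dvd_mul d₁ d₂) <|
    (h₁.coprime_dvd_left (Nat.dvd_of_mem_divisors hd₁)).mul_left
      (h₂.coprime_dvd_left (Nat.dvd_of_mem_divisors hd₂))
  set c := ((#{m ∈ residueInterval a u N | d₁.lcm d₂ ∣ m} : ℕ) : ℝ)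
  calc
    _ = |(μ (e₁ / d₁) : ℝ)| * |(μ (e₂ / d₂) : ℝ)| * (d₁ * d₂) * |c - N / q / d₁.lcm d₂| := by
      rw [← abs_mul, ← abs_of_nonneg (by positivity : (0 : ℝ) ≤ d₁ * d₂), ← abs_mul, ← abs_mul,
        abs_of_nonneg (by positivity : (0 : ℝ) ≤ d₁ * d₂)]
      congr 1
      ring
    _ ≤ 1 * 1 * (d₁ * d₂) * 1 := by
      gcongr
      · exact hμ _
      · exact hμ _
      · exact abs_card_filter_dvd_residueInterval_sub_le hcop a u N
    _ = d₁ * d₂ := by ring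

theorem sum_sq_sum_mul_ramanujanSum_le {q : ℕ} [NeZero q] (a : ZMod q) (u N : ℕ) {D : Finset ℕ}
    (hD : ∀ e ∈ D, e ≠ 0 ∧ e.Coprime q) (w : ℕ → ℝ) :
    ∑ m ∈ residueInterval a u N, (∑ e ∈ D, w e * ramanujanSum e m) ^ 2 ≤
      (N : ℝ) / q * ∑ e ∈ D, w e ^ 2 * e.totient + (∑ e ∈ D, |w e| * σ 1 e) ^ 2 := by
  calc
    _ = ∑ e₁ ∈ D, ∑ e₂ ∈ D, w e₁ * w e₂ *
          ∑ m ∈ residueInterval a u N, (ramanujanSum e₁ m * ramanujanSum e₂ m : ℝ) := by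
      simp only [sq, sum_mul_sum]
      rw [sum_comm]
      refine sum_congr rfl fun e₁ _ ↦ ?_
      rw [sum_comm]
      refine sum_congr rfl fun e₂ _ ↦ ?_
      rw [mul_sum]
      exact sum_congr rfl fun m _ ↦ mul_mul_mul_comm ..
    _ ≤ ∑ e₁ ∈ D, ∑ e₂ ∈ D,
          (w e₁ * w e₂ * ((N : ℝ) / q * if e₁ = e₂ then (e₁.totient : ℝ) else 0) +
            (|w e₁| * σ 1 e₁) * (|w e₂| * σ 1 e₂)) := by
      refine sum_le_sum fun e₁ he₁ ↦ sum_le_sum fun e₂ he₂ ↦ ?_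
      rw [← sub_le_iff_le_add', ← mul_sub, mul_mul_mul_comm, ← abs_mul]
      refine (le_abs_self _).trans ?_
      rw [abs_mul]
      gcongr
      exact abs_sum_ramanujanSum_mul_sub_le a u N (hD e₁ he₁).1 (hD e₂ he₂).1 (hD e₁ he₁).2
        (hD e₂ he₂).2
    _ = _ := by
      simp only [sum_add_distrib, ← sum_mul_sum, ← sq, mul_ite, mul_zero, sum_ite_eq, mul_sum]
      congr 1
      refine sum_congr rfl fun e he ↦ ?_
      rw [if_pos he]
      ring

theorem sum_filter_dvd_inv_le {S : Finset ℕ} (hS : ∀ n ∈ S, ∀ k, k ∣ n → k ∈ S) (p : ℕ) :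
    ∑ n ∈ S with p ∣ n, (n : ℝ)⁻¹ ≤ (p : ℝ)⁻¹ * ∑ n ∈ S, (n : ℝ)⁻¹ := by
  calc
    _ ≤ ∑ n ∈ S.image (p * ·), (n : ℝ)⁻¹ := by
      refine sum_le_sum_of_subset_of_nonneg (fun n hn ↦ ?_) fun _ _ _ ↦ by positivity
      obtain ⟨hnS, k, rfl⟩ := mem_filter.mp hn
      exact mem_image_of_mem _ (hS _ hnS k (dvd_mul_left k p))
    _ ≤ ∑ n ∈ S, ((p * n : ℕ) : ℝ)⁻¹ := sum_image_le_of_nonneg fun _ _ ↦ by positivity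
    _ = _ := by simp only [Nat.cast_mul, mul_inv, mul_sum]

theorem prod_one_sub_inv_mul_sum_inv_le {S : Finset ℕ} (hS : ∀ n ∈ S, ∀ k, k ∣ n → k ∈ S)
    (P : Finset ℕ) :
    (∏ p ∈ P, (1 - (p : ℝ)⁻¹)) * ∑ n ∈ S, (n : ℝ)⁻¹ ≤
      ∑ n ∈ S with ∀ p ∈ P, ¬p ∣ n, (n : ℝ)⁻¹ := by
  induction P using Finset.induction_on with
  | empty => simp
  | insert p P hp ih =>
    set T := {n ∈ S | ∀ p ∈ P, ¬p ∣ n} with hT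
    have hTdiv : ∀ n ∈ T, ∀ k, k ∣ n → k ∈ T := by
      intro n hn k hk
      obtain ⟨hnS, hnP⟩ := mem_filter.mp hn
      exact mem_filter.mpr ⟨hS n hnS k hk, fun p hp hpk ↦ hnP p hp (hpk.trans hk)⟩
    have hfilter : {n ∈ S | ∀ r ∈ insert p P, ¬r ∣ n} = {n ∈ T | ¬p ∣ n} := by
      ext n
      simp only [hT, mem_filter, forall_mem_insert]
      tauto
    have hsplit := sum_filter_add_sum_filter_not T (p ∣ ·) fun n ↦ (n : ℝ)⁻¹
    have hmul := sum_filter_dvd_inv_le hTdiv p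
    have hp1 : 0 ≤ 1 - (p : ℝ)⁻¹ := sub_nonneg.mpr (Nat.cast_inv_le_one p)
    calc
      _ = (1 - (p : ℝ)⁻¹) * ((∏ p ∈ P, (1 - (p : ℝ)⁻¹)) * ∑ n ∈ S, (n : ℝ)⁻¹) := by
        rw [prod_insert hp, mul_assoc]
      _ ≤ (1 - (p : ℝ)⁻¹) * ∑ n ∈ T, (n : ℝ)⁻¹ := by gcongr
      _ ≤ _ := by
        rw [hfilter]
        linarith

theorem totient_div_mul_sum_inv_le {S : Finset ℕ} (hS : ∀ n ∈ S, ∀ k, k ∣ n → k ∈ S)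
    {q : ℕ} (hq : q ≠ 0) :
    (q.totient : ℝ) / q * ∑ n ∈ S, (n : ℝ)⁻¹ ≤ ∑ n ∈ S with n.Coprime q, (n : ℝ)⁻¹ := by
  have htotient : (q.totient : ℝ) / q = ∏ p ∈ q.primeFactors, (1 - (p : ℝ)⁻¹) := by
    rw [div_eq_iff (by exact_mod_cast hq), mul_comm]
    have h := congrArg (Rat.cast (K := ℝ)) (Nat.totient_eq_mul_prod_factors q)
    push_cast at h
    exact h
  have hcoprime (n : ℕ) : n.Coprime q ↔ ∀ p ∈ q.primeFactors, ¬p ∣ n := by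
    simp only [Nat.mem_primeFactors_of_ne_zero hq, and_imp]
    exact ⟨fun h p hp hpq hpn ↦ Nat.not_coprime_of_dvd_of_dvd hp.one_lt hpn hpq h,
      fun h ↦ Nat.coprime_of_dvd fun p hp hpn hpq ↦ h p hp hpq hpn⟩
  simp only [htotient, hcoprime]
  exact prod_one_sub_inv_mul_sum_inv_le hS q.primeFactors

theorem sum_inv_sq_le_two (S : Finset ℕ) : ∑ b ∈ S, ((b : ℝ) ^ 2)⁻¹ ≤ 2 := by
  calc
    _ ≤ ∑ b ∈ insert 0 (Ioo 0 (S.sup id + 1)), ((b : ℝ) ^ 2)⁻¹ := by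
      refine sum_le_sum_of_subset_of_nonneg (fun b hb ↦ ?_) fun _ _ _ ↦ by positivity
      have hle : b ≤ S.sup id := le_sup (f := id) hb
      simp only [mem_insert, mem_Ioo]
      lia
    _ = ∑ b ∈ Ioo 0 (S.sup id + 1), ((b : ℝ) ^ 2)⁻¹ := by
      rw [sum_insert (by simp)]
      simp
    _ ≤ 2 := by simpa using sum_Ioo_inv_sq_le (α := ℝ) 0 (S.sup id + 1)

theorem sum_inv_le_two_mul_sum_squarefree_inv {S : Finset ℕ}
    (hS : ∀ n ∈ S, ∀ k, k ∣ n → k ∈ S) :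
    ∑ n ∈ S, (n : ℝ)⁻¹ ≤ 2 * ∑ n ∈ S with Squarefree n, (n : ℝ)⁻¹ := by
  calc
    _ ≤ ∑ n ∈ (S ×ˢ {n ∈ S | Squarefree n}).image (fun t : ℕ × ℕ ↦ t.1 ^ 2 * t.2),
          (n : ℝ)⁻¹ := by
      refine sum_le_sum_of_subset_of_nonneg (fun n hn ↦ ?_) fun _ _ _ ↦ by positivity
      obtain ⟨a, b, rfl, ha⟩ := Nat.sq_mul_squarefree n
      have hbS : b ∈ S := hS _ hn b (Dvd.dvd.mul_right (dvd_pow_self b two_ne_zero) a)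
      have haS : a ∈ S := hS _ hn a (dvd_mul_left a _)
      exact mem_image.mpr ⟨(b, a), mem_product.mpr ⟨hbS, mem_filter.mpr ⟨haS, ha⟩⟩, rfl⟩
    _ ≤ ∑ t ∈ S ×ˢ {n ∈ S | Squarefree n}, ((t.1 ^ 2 * t.2 : ℕ) : ℝ)⁻¹ :=
      sum_image_le_of_nonneg (f := fun n : ℕ ↦ (n : ℝ)⁻¹) fun _ _ ↦ by positivity
    _ = (∑ b ∈ S, ((b : ℝ) ^ 2)⁻¹) * ∑ n ∈ S with Squarefree n, (n : ℝ)⁻¹ := by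
      rw [sum_mul_sum, sum_product]
      push_cast
      simp only [mul_inv]
    _ ≤ _ := by
      gcongr
      exact sum_inv_sq_le_two S

/-- The moduli entering the sieve up to level `z` for a progression of difference `q`. -/
def sieveModuli (q z : ℕ) : Finset ℕ :=
  {e ∈ Icc 1 z | Squarefree e ∧ e.Coprime q}

/-- The sum `∑ μ(e)² / φ(e)` over `e ≤ z` coprime to `q`, by which Selberg's sieve saves. -/
noncomputable def selbergSum (q z : ℕ) : ℝ :=
  ∑ e ∈ sieveModuli q z, (e.totient : ℝ)⁻¹

theorem one_le_selbergSum (q : ℕ) {z : ℕ} (hz : z ≠ 0) : 1 ≤ selbergSum q z := by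
  have hmem : 1 ∈ sieveModuli q z := by
    simp [sieveModuli, Nat.one_le_iff_ne_zero.mpr hz]
  simpa [selbergSum] using single_le_sum (f := fun e : ℕ ↦ (e.totient : ℝ)⁻¹)
    (fun _ _ ↦ by positivity) hmem

theorem totient_div_mul_log_le_selbergSum {q : ℕ} (hq : q ≠ 0) (z : ℕ) :
    (q.totient : ℝ) / q * Real.log (z + 1) ≤ 2 * selbergSum q z := by
  have hIcc : ∀ n ∈ Icc 1 z, ∀ k, k ∣ n → k ∈ Icc 1 z := by
    intro n hn k hk
    obtain ⟨hn1, hnz⟩ := mem_Icc.mp hn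
    exact mem_Icc.mpr ⟨Nat.pos_of_dvd_of_pos hk hn1, (Nat.le_of_dvd hn1 hk).trans hnz⟩
  have hcop : ∀ n ∈ {n ∈ Icc 1 z | n.Coprime q}, ∀ k, k ∣ n → k ∈ {n ∈ Icc 1 z | n.Coprime q} := by
    intro n hn k hk
    obtain ⟨hnz, hnq⟩ := mem_filter.mp hn
    exact mem_filter.mpr ⟨hIcc n hnz k hk, hnq.coprime_dvd_left hk⟩
  have hlog : Real.log (z + 1) ≤ ∑ n ∈ Icc 1 z, (n : ℝ)⁻¹ := by
    simpa [harmonic_eq_sum_Icc] using log_add_one_le_harmonic z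
  calc
    _ ≤ (q.totient : ℝ) / q * ∑ n ∈ Icc 1 z, (n : ℝ)⁻¹ := by gcongr
    _ ≤ ∑ n ∈ Icc 1 z with n.Coprime q, (n : ℝ)⁻¹ := totient_div_mul_sum_inv_le hIcc hq
    _ ≤ 2 * ∑ e ∈ sieveModuli q z, (e : ℝ)⁻¹ := by
      simpa only [sieveModuli, filter_filter, and_comm] using
        sum_inv_le_two_mul_sum_squarefree_inv hcop
    _ ≤ _ := by
      unfold selbergSum
      gcongr with e he
      · have he1 : 0 < e := (mem_Icc.mp (mem_filter.mp he).1).1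
        exact_mod_cast Nat.totient_pos.mpr he1
      · exact Nat.totient_le e

/-- The elements of the residue class `a` in `(u, u + N]` without prime factors up to `z`. -/
def siftedInterval {q : ℕ} (a : ZMod q) (u N z : ℕ) : Finset ℕ :=
  {m ∈ residueInterval a u N | ∀ p ∈ Nat.primesLE z, ¬p ∣ m}

theorem sum_sieveModuli_mul_ramanujanSum_of_mem {q : ℕ} {a : ZMod q} {u N z m : ℕ}
    (hm : m ∈ siftedInterval a u N z) :
    ∑ e ∈ sieveModuli q z, (μ e : ℝ) / e.totient * ramanujanSum e m = selbergSum q z := by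
  refine sum_congr rfl fun e he ↦ ?_
  obtain ⟨hez, hsq, -⟩ := mem_filter.mp he
  obtain ⟨he1, hez⟩ := mem_Icc.mp hez
  have hcop : e.Coprime m := Nat.coprime_of_dvd fun p hp hpe hpm ↦
    (mem_filter.mp hm).2 p (Nat.mem_primesLE.mpr ⟨(Nat.le_of_dvd he1 hpe).trans hez, hp⟩) hpm
  have hμ : (μ e : ℝ) ^ 2 = 1 := by exact_mod_cast moebius_sq_eq_one_of_squarefree hsq
  rw [ramanujanSum_eq_moebius_of_coprime hcop, div_mul_eq_mul_div, ← sq, hμ, one_div]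

theorem sum_sieveModuli_abs_mul_sigma_le (q z : ℕ) :
    ∑ e ∈ sieveModuli q z, |(μ e : ℝ) / e.totient| * σ 1 e ≤ (z : ℝ) ^ 3 := by
  have hterm : ∀ e ∈ sieveModuli q z, |(μ e : ℝ) / e.totient| * σ 1 e ≤ (z : ℝ) ^ 2 := by
    intro e he
    obtain ⟨he1, hez⟩ := mem_Icc.mp (mem_filter.mp he).1
    have hφ : (1 : ℝ) ≤ e.totient := by exact_mod_cast Nat.totient_pos.mpr he1
    have hμ : |(μ e : ℝ)| ≤ 1 := by exact_mod_cast abs_moebius_le_one (n := e)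
    have hσ : (σ 1 e : ℝ) ≤ (z : ℝ) ^ 2 := by
      exact_mod_cast (sigma_le_pow_succ 1 e).trans (Nat.pow_le_pow_left hez 2)
    rw [abs_div, Nat.abs_cast]
    calc
      _ ≤ 1 * (z : ℝ) ^ 2 := by
        gcongr
        exact (div_le_one (by positivity)).mpr (hμ.trans hφ)
      _ = _ := one_mul _
  have hcard : (#(sieveModuli q z) : ℝ) ≤ z := by
    exact_mod_cast (card_filter_le _ _).trans_eq (Nat.card_Icc 1 z)
  calc
    _ ≤ #(sieveModuli q z) • (z : ℝ) ^ 2 := sum_le_card_nsmul _ _ _ hterm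
    _ ≤ z * (z : ℝ) ^ 2 := by
      rw [nsmul_eq_mul]
      gcongr
    _ = _ := by ring

theorem card_siftedInterval_mul_sq_le {q : ℕ} [NeZero q] (a : ZMod q) (u N z : ℕ) :
    #(siftedInterval a u N z) * selbergSum q z ^ 2 ≤
      (N : ℝ) / q * selbergSum q z + (z : ℝ) ^ 6 := by
  set w : ℕ → ℝ := fun e ↦ (μ e : ℝ) / e.totient with hw
  have hmoduli : ∀ e ∈ sieveModuli q z, e ≠ 0 ∧ e.Coprime q := fun e he ↦
    ⟨Nat.one_le_iff_ne_zero.mp (mem_Icc.mp (mem_filter.mp he).1).1, (mem_filter.mp he).2.2⟩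
  have hdiag : ∑ e ∈ sieveModuli q z, w e ^ 2 * e.totient = selbergSum q z := by
    refine sum_congr rfl fun e he ↦ ?_
    have hμ : (μ e : ℝ) ^ 2 = 1 := by
      exact_mod_cast moebius_sq_eq_one_of_squarefree (mem_filter.mp he).2.1
    have hφ : (e.totient : ℝ) ≠ 0 := by
      exact_mod_cast (Nat.totient_pos.mpr (Nat.pos_of_ne_zero (hmoduli e he).1)).ne'
    rw [hw, div_pow, hμ]
    field_simp
  calc
    _ = ∑ m ∈ siftedInterval a u N z, (∑ e ∈ sieveModuli q z, w e * ramanujanSum e m) ^ 2 := by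
      rw [sum_congr rfl fun m hm ↦ by rw [sum_sieveModuli_mul_ramanujanSum_of_mem hm], sum_const,
        nsmul_eq_mul]
    _ ≤ ∑ m ∈ residueInterval a u N, (∑ e ∈ sieveModuli q z, w e * ramanujanSum e m) ^ 2 :=
      sum_le_sum_of_subset_of_nonneg (filter_subset _ _) fun _ _ _ ↦ sq_nonneg _
    _ ≤ (N : ℝ) / q * ∑ e ∈ sieveModuli q z, w e ^ 2 * e.totient +
          (∑ e ∈ sieveModuli q z, |w e| * σ 1 e) ^ 2 :=
      sum_sq_sum_mul_ramanujanSum_le a u N hmoduli w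
    _ ≤ (N : ℝ) / q * selbergSum q z + ((z : ℝ) ^ 3) ^ 2 := by
      rw [hdiag]
      gcongr
      exact sum_sieveModuli_abs_mul_sigma_le q z
    _ = _ := by ring

theorem card_siftedInterval_le {q : ℕ} [NeZero q] (a : ZMod q) (u N : ℕ) {z : ℕ} (hz : z ≠ 0) :
    (#(siftedInterval a u N z) : ℝ) ≤ 2 * N / (q.totient * Real.log (z + 1)) + (z : ℝ) ^ 6 := by
  set S := selbergSum q z
  have hS : 1 ≤ S := one_le_selbergSum q hz
  have hq : (0 : ℝ) < q := by exact_mod_cast NeZero.pos q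
  have hφ : (0 : ℝ) < q.totient := by exact_mod_cast Nat.totient_pos.mpr (NeZero.pos q)
  have hlog : 0 < Real.log (z + 1) :=
    Real.log_pos (by exact_mod_cast Nat.lt_add_of_pos_left (Nat.pos_of_ne_zero hz))
  have hlower := totient_div_mul_log_le_selbergSum (NeZero.ne q) z
  calc
    (#(siftedInterval a u N z) : ℝ) ≤ ((N : ℝ) / q * S + (z : ℝ) ^ 6) / S ^ 2 := by
      rw [le_div_iff₀ (by positivity)]
      exact card_siftedInterval_mul_sq_le a u N z
    _ = (N : ℝ) / q / S + (z : ℝ) ^ 6 / S ^ 2 := by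
      field_simp
    _ ≤ (N : ℝ) / q / (q.totient / q * Real.log (z + 1) / 2) + (z : ℝ) ^ 6 := by
      gcongr
      · linarith
      · exact div_le_self (by positivity) (one_le_pow₀ hS)
    _ = _ := by field_simp

theorem card_primes_residueInterval_le {q : ℕ} [NeZero q] (a : ZMod q) (u N : ℕ) {t : ℝ}
    (ht : 1 < t) :
    (#{p ∈ residueInterval a u N | p.Prime} : ℝ) ≤
      2 * N / (q.totient * Real.log t) + 2 * t ^ 6 := by
  set z := ⌊t⌋₊
  have hz : z ≠ 0 := (Nat.floor_pos.mpr ht.le).ne'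
  have hzt : (z : ℝ) ≤ t := Nat.floor_le (by linarith)
  have hlog : 0 < Real.log t := Real.log_pos ht
  have hφ : (0 : ℝ) < q.totient := by exact_mod_cast Nat.totient_pos.mpr (NeZero.pos q)
  have hsubset : {p ∈ residueInterval a u N | p.Prime} ⊆ siftedInterval a u N z ∪ Ioc 0 z := by
    intro p hp
    obtain ⟨hpI, hp⟩ := mem_filter.mp hp
    rcases le_or_gt p z with hpz | hzp
    · exact mem_union_right _ (mem_Ioc.mpr ⟨hp.pos, hpz⟩)
    · refine mem_union_left _ (mem_filter.mpr ⟨hpI, fun r hr hrp ↦ ?_⟩)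
      obtain ⟨hrz, hr⟩ := Nat.mem_primesLE.mp hr
      rw [(Nat.prime_dvd_prime_iff_eq hr hp).mp hrp] at hrz
      lia
  calc
    _ ≤ (#(siftedInterval a u N z) : ℝ) + z := by
      exact_mod_cast (card_le_card hsubset).trans
        ((card_union_le _ _).trans_eq (by rw [Nat.card_Ioc, Nat.sub_zero]))
    _ ≤ 2 * N / (q.totient * Real.log (z + 1)) + (z : ℝ) ^ 6 + z := by
      gcongr
      exact card_siftedInterval_le a u N hz
    _ ≤ 2 * N / (q.totient * Real.log t) + t ^ 6 + t ^ 6 := by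
      gcongr
      · exact (Nat.lt_floor_add_one t).le
      · exact hzt.trans (le_self_pow₀ ht.le (by norm_num))
    _ = _ := by ring

theorem theta_natCast_add_one (M : ℕ) :
    Chebyshev.theta ((M + 1 : ℕ) : ℝ) =
      Chebyshev.theta M + if (M + 1).Prime then Real.log (M + 1 : ℕ) else 0 := by
  rw [Chebyshev.theta_eq_sum_primesLE_log, Chebyshev.theta_eq_sum_primesLE_log, Nat.primesLE_succ]
  split_ifs
  · rw [sum_insert (Nat.notMem_primesLE M), add_comm]
  · rw [add_zero]

theorem theta_mul_inv_sq_sub_inv_sq_le {M : ℕ} (hM : M ≠ 0) :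
    Chebyshev.theta M * (((M : ℝ) ^ 2)⁻¹ - (((M : ℝ) + 1) ^ 2)⁻¹) ≤
      2 * Real.log 4 * ((M : ℝ)⁻¹ - ((M : ℝ) + 1)⁻¹) := by
  have hM0 : (0 : ℝ) < M := by exact_mod_cast Nat.pos_of_ne_zero hM
  have hinv : 0 ≤ (M : ℝ)⁻¹ - ((M : ℝ) + 1)⁻¹ := by
    rw [sub_nonneg]
    gcongr
    linarith
  calc
    _ = Chebyshev.theta M * (((M : ℝ)⁻¹ - ((M : ℝ) + 1)⁻¹) * ((M : ℝ)⁻¹ + ((M : ℝ) + 1)⁻¹)) := by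
      simp only [← inv_pow]
      ring
    _ ≤ Real.log 4 * M * (((M : ℝ)⁻¹ - ((M : ℝ) + 1)⁻¹) * ((M : ℝ)⁻¹ + (M : ℝ)⁻¹)) := by
      gcongr
      · exact Chebyshev.theta_le_log4_mul_x hM0.le
      · linarith
    _ = _ := by
      field_simp
      ring

-- The boundary term `θ(M) / M²` of partial summation lets the induction on `M` close.
theorem sum_primes_Ioc_log_div_sq_le_theta {K M : ℕ} (hK : K ≠ 0) (hKM : K ≤ M) :
    ∑ r ∈ Ioc K M with r.Prime, Real.log r / (r : ℝ) ^ 2 ≤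
      Chebyshev.theta M * ((M : ℝ) ^ 2)⁻¹ + 2 * Real.log 4 * ((K : ℝ)⁻¹ - (M : ℝ)⁻¹) := by
  induction M, hKM using Nat.le_induction with
  | base =>
    have := Chebyshev.theta_nonneg (K : ℝ)
    simp only [Ioc_self, filter_empty, sum_empty, sub_self, mul_zero, add_zero]
    positivity
  | succ M hKM ih =>
    have hstep := theta_mul_inv_sq_sub_inv_sq_le (M := M) (by lia)
    rw [sum_filter] at ih
    have hite : (if (M + 1).Prime then Real.log (M + 1 : ℕ) / ((M + 1 : ℕ) : ℝ) ^ 2 else 0) =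
        (if (M + 1).Prime then Real.log (M + 1 : ℕ) else 0) * (((M + 1 : ℕ) : ℝ) ^ 2)⁻¹ := by
      rw [ite_mul, zero_mul, div_eq_mul_inv]
    rw [sum_filter, sum_Ioc_succ_top hKM, hite, theta_natCast_add_one]
    push_cast
    linarith

theorem sum_primes_Ioc_log_div_sq_le {K : ℕ} (hK : K ≠ 0) (M : ℕ) :
    ∑ r ∈ Ioc K M with r.Prime, Real.log r / (r : ℝ) ^ 2 ≤ 4 / K := by
  have hK0 : (0 : ℝ) < K := by exact_mod_cast Nat.pos_of_ne_zero hK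
  rcases le_or_gt M K with hMK | hKM
  · rw [Ioc_eq_empty_of_le hMK, filter_empty, sum_empty]
    positivity
  have hM0 : (0 : ℝ) < M := hK0.trans (by exact_mod_cast hKM)
  have hlog : Real.log 4 ≤ 2 := by
    rw [show (4 : ℝ) = 2 ^ 2 by norm_num, Real.log_pow]
    push_cast
    linarith [Real.log_two_lt_d9]
  calc
    _ ≤ Chebyshev.theta M * ((M : ℝ) ^ 2)⁻¹ + 2 * Real.log 4 * ((K : ℝ)⁻¹ - (M : ℝ)⁻¹) :=
      sum_primes_Ioc_log_div_sq_le_theta hK hKM.le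
    _ ≤ Real.log 4 * M * ((M : ℝ) ^ 2)⁻¹ + 2 * Real.log 4 * ((K : ℝ)⁻¹ - (M : ℝ)⁻¹) := by
      gcongr
      exact Chebyshev.theta_le_log4_mul_x hM0.le
    _ = 2 * Real.log 4 * (K : ℝ)⁻¹ - Real.log 4 * (M : ℝ)⁻¹ := by
      field_simp
      ring
    _ ≤ 2 * 2 * (K : ℝ)⁻¹ - 0 := by
      gcongr
      positivity
    _ = _ := by ring

theorem sum_primes_Ioc_floor_inv_sq_le {y : ℝ} (hy1 : 1 < y) (M : ℕ) :
    ∑ r ∈ Ioc ⌊y⌋₊ M with r.Prime, ((r : ℝ) ^ 2)⁻¹ ≤ 8 / (y * Real.log y) := by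
  have hy0 : 0 < y := one_pos.trans hy1
  have hlog : 0 < Real.log y := Real.log_pos hy1
  have hfloor0 : ⌊y⌋₊ ≠ 0 := (Nat.floor_pos.mpr hy1.le).ne'
  have hfloor : y / 2 ≤ ⌊y⌋₊ := by
    have h1 : (1 : ℝ) ≤ ⌊y⌋₊ := by exact_mod_cast Nat.one_le_iff_ne_zero.mpr hfloor0
    linarith [Nat.lt_floor_add_one y]
  calc
    _ ≤ ∑ r ∈ Ioc ⌊y⌋₊ M with r.Prime, (Real.log y)⁻¹ * (Real.log r / (r : ℝ) ^ 2) := by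
      refine sum_le_sum fun r hr ↦ ?_
      have hyr : y < r := Nat.lt_of_floor_lt (mem_Ioc.mp (mem_filter.mp hr).1).1
      have hr0 : (0 : ℝ) < r := hy0.trans hyr
      calc
        _ = (Real.log y)⁻¹ * (Real.log y / (r : ℝ) ^ 2) := by field_simp
        _ ≤ _ := by gcongr
    _ ≤ (Real.log y)⁻¹ * (4 / (y / 2)) := by
      rw [← mul_sum]
      gcongr
      exact (sum_primes_Ioc_log_div_sq_le hfloor0 M).trans (by gcongr)
    _ = _ := by
      field_simp
      norm_num

theorem sum_primes_Ioc_ite_inv_sq_le {w : ℝ} (hw : 1 < w) (K M : ℕ) :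
    ∑ r ∈ Ioc K M with r.Prime, (if w < r then ((r : ℝ) ^ 2)⁻¹ else 0) ≤
      8 / (w * Real.log w) := by
  rw [← sum_filter]
  refine (sum_le_sum_of_subset_of_nonneg (fun r hr ↦ ?_) fun _ _ _ ↦ by positivity).trans
    (sum_primes_Ioc_floor_inv_sq_le hw M)
  simp only [mem_filter, mem_Ioc] at hr ⊢
  obtain ⟨⟨⟨-, hrM⟩, hr⟩, hwr⟩ := hr
  exact ⟨⟨(Nat.floor_lt' hr.ne_zero).mpr hwr, hrM⟩, hr⟩

theorem sum_primesLE_hy_le (y : ℝ) (a : ℤ) (X : ℕ) :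
    ∑ p ∈ X.primesLE, hy y ((p : ℤ) - a).natAbs ≤
      ∑ r ∈ Ioc ⌊y⌋₊ (X + a.natAbs) with r.Prime,
        (r : ℝ)⁻¹ * #{p ∈ residueInterval (a : ZMod r) 0 X | p.Prime} := by
  have hterm : ∀ p ∈ X.primesLE, hy y ((p : ℤ) - a).natAbs ≤
      ∑ r ∈ Ioc ⌊y⌋₊ (X + a.natAbs) with r.Prime,
        if (p : ZMod r) = a then (r : ℝ)⁻¹ else 0 := by
    intro p hp
    have hpX : p ≤ X := Nat.le_of_mem_primesLE hp
    rw [hy, ← sum_filter]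
    simp only [one_div]
    refine sum_le_sum_of_subset_of_nonneg (fun r hr ↦ ?_) fun _ _ _ ↦ by positivity
    obtain ⟨hr, hyr⟩ := mem_filter.mp hr
    obtain ⟨hr, hrdvd, hne⟩ := Nat.mem_primeFactors.mp hr
    have hle : r ≤ ((p : ℤ) - a).natAbs := Nat.le_of_dvd (Nat.pos_of_ne_zero hne) hrdvd
    have hcast : (p : ZMod r) = a := by
      have h := (ZMod.intCast_zmod_eq_zero_iff_dvd _ r).mpr (Int.natCast_dvd.mpr hrdvd)
      push_cast at h
      exact sub_eq_zero.mp h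
    have hfloor : ⌊y⌋₊ < r := (Nat.floor_lt' hr.ne_zero).mpr hyr
    exact mem_filter.mpr ⟨mem_filter.mpr ⟨mem_Ioc.mpr ⟨hfloor, by lia⟩, hr⟩, hcast⟩
  refine (sum_le_sum hterm).trans_eq ?_
  rw [sum_comm]
  refine sum_congr rfl fun r _ ↦ ?_
  have hfilter : {p ∈ X.primesLE | ((p : ℕ) : ZMod r) = a} =
      {p ∈ residueInterval (a : ZMod r) 0 X | p.Prime} := by
    rw [residueInterval, Nat.primesLE_eq_filter_Ioc_zero, zero_add, filter_comm]
  rw [← sum_filter, hfilter, sum_const, nsmul_eq_mul, mul_comm]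

theorem card_residueInterval_floor_le {q : ℕ} [NeZero q] (a : ZMod q) (u : ℕ) {x : ℝ}
    (hqx : (q : ℝ) ≤ 2 * x) : (#(residueInterval a u ⌊x⌋₊) : ℝ) ≤ 3 * x / q := by
  have hq : (0 : ℝ) < q := by exact_mod_cast NeZero.pos q
  calc
    _ ≤ (⌊x⌋₊ : ℝ) / q + 1 := by
      linarith [(abs_le.mp (abs_card_residueInterval_sub_le a u ⌊x⌋₊)).2]
    _ ≤ x / q + 2 * x / q := by
      gcongr
      · exact Nat.floor_le (by linarith)
      · exact (one_le_div hq).mpr hqx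
    _ = _ := by ring

theorem eventually_div_log_le_two_mul_primeCounting :
    ∀ᶠ x : ℝ in atTop, x / Real.log x ≤ 2 * Nat.primeCounting ⌊x⌋₊ := by
  have hsmall : ∀ᶠ x : ℝ in atTop, Real.log x ≤ 1 / 32 * x := by
    filter_upwards [Real.isLittleO_log_id_atTop.bound (by norm_num : (0 : ℝ) < 1 / 32),
      eventually_ge_atTop 1] with x hx hx1
    simpa [abs_of_nonneg (Real.log_nonneg hx1), abs_of_pos (one_pos.trans_le hx1)] using hx
  filter_upwards [hsmall, eventually_ge_atTop 20] with x hlog hx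
  have hlog0 : 0 < Real.log x := Real.log_pos (by linarith)
  have hadd : Real.log (x + 2) ≤ 2 * Real.log x := by
    calc
      _ ≤ Real.log (x ^ 2) := Real.log_le_log (by linarith) (by nlinarith)
      _ = 2 * Real.log x := by rw [Real.log_pow, Nat.cast_ofNat]
  have hpi := Chebyshev.pi_ge' (x := x) (by linarith)
  rw [div_le_iff₀ hlog0] at hpi ⊢
  nlinarith [Real.log_two_gt_d9]

theorem eventually_card_primes_residueInterval_le :
    ∀ᶠ x : ℝ in atTop, ∀ (q : ℕ) [NeZero q] (a : ZMod q) (u : ℕ), (q : ℝ) ≤ √x →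
      (#{p ∈ residueInterval a u ⌊x⌋₊ | p.Prime} : ℝ) ≤ 49 * x / (q.totient * Real.log x) := by
  filter_upwards [(isLittleO_log_rpow_atTop (by norm_num : (0 : ℝ) < 1 / 4)).bound
    (by norm_num : (0 : ℝ) < 1 / 2), eventually_gt_atTop 1] with x hlog hx q _ a u hq
  have hx0 : 0 < x := one_pos.trans hx
  have hL : 0 < Real.log x := Real.log_pos hx
  have hφ : (0 : ℝ) < q.totient := by exact_mod_cast Nat.totient_pos.mpr (NeZero.pos q)
  have hφq : (q.totient : ℝ) ≤ q := by exact_mod_cast Nat.totient_le q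
  rw [Real.norm_of_nonneg hL.le, Real.norm_of_nonneg (by positivity)] at hlog
  set t : ℝ := x ^ (1 / 24 : ℝ) with ht
  have ht6 : t ^ 6 = x ^ (1 / 4 : ℝ) := by
    rw [ht, ← Real.rpow_natCast, ← Real.rpow_mul hx0.le]
    norm_num
  have hlogt : Real.log t = Real.log x / 24 := by
    rw [ht, Real.log_rpow hx0]
    ring
  have hsqrt : x ^ (1 / 4 : ℝ) * x ^ (1 / 4 : ℝ) * √x = x := by
    rw [Real.sqrt_eq_rpow, ← Real.rpow_add hx0, ← Real.rpow_add hx0]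
    norm_num
  have herror : 2 * t ^ 6 ≤ x / (q.totient * Real.log x) := by
    rw [le_div_iff₀ (by positivity), ht6]
    calc
      _ ≤ 2 * x ^ (1 / 4 : ℝ) * (√x * (1 / 2 * x ^ (1 / 4 : ℝ))) := by
        gcongr
        exact hφq.trans hq
      _ = x := by linarith
  calc
    _ ≤ 2 * ⌊x⌋₊ / (q.totient * Real.log t) + 2 * t ^ 6 :=
      card_primes_residueInterval_le a u _ (Real.one_lt_rpow hx (by norm_num))
    _ ≤ 2 * x / (q.totient * (Real.log x / 24)) + x / (q.totient * Real.log x) := by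
      rw [hlogt]
      gcongr
      exact Nat.floor_le hx0.le
    _ = _ := by
      field_simp
      norm_num

theorem eventually_inv_mul_card_primes_residueInterval_le :
    ∀ᶠ x : ℝ in atTop, ∀ (r : ℕ) (a : ZMod r) (u : ℕ), r.Prime → (r : ℝ) ≤ 2 * x →
      (r : ℝ)⁻¹ * #{p ∈ residueInterval a u ⌊x⌋₊ | p.Prime} ≤
        98 * x / Real.log x * ((r : ℝ) ^ 2)⁻¹ +
          if √x < r then 3 * x * ((r : ℝ) ^ 2)⁻¹ else 0 := by
  filter_upwards [eventually_card_primes_residueInterval_le, eventually_gt_atTop 1]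
    with x hsieve hx r a u hr hrx
  have hL : 0 < Real.log x := Real.log_pos hx
  have hr0 : (0 : ℝ) < r := by exact_mod_cast hr.pos
  have : NeZero r := ⟨hr.ne_zero⟩
  split_ifs with hrsqrt
  · have htrivial : (#{p ∈ residueInterval a u ⌊x⌋₊ | p.Prime} : ℝ) ≤ 3 * x / r := by
      calc
        _ ≤ (#(residueInterval a u ⌊x⌋₊) : ℝ) := by
          exact_mod_cast card_filter_le _ _
        _ ≤ 3 * x / r := card_residueInterval_floor_le a u hrx
    calc
      _ ≤ (r : ℝ)⁻¹ * (3 * x / r) := by gcongr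
      _ = 0 + 3 * x * ((r : ℝ) ^ 2)⁻¹ := by
        field_simp
        ring
      _ ≤ _ := by
        gcongr
        positivity
  · have hφ : (r : ℝ) / 2 ≤ r.totient := by
      have hr2 : (2 : ℝ) ≤ r := by exact_mod_cast hr.two_le
      rw [Nat.totient_prime hr, Nat.cast_pred hr.pos]
      linarith
    calc
      _ ≤ (r : ℝ)⁻¹ * (49 * x / (r / 2 * Real.log x)) := by
        gcongr
        exact (hsieve r a u (not_lt.mp hrsqrt)).trans (by gcongr)
      _ = _ := by
        field_simp
        ring

theorem eventually_sum_inv_mul_card_primes_residueInterval_le :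
    ∀ᶠ x : ℝ in atTop, ∀ (a : ℤ) (M : ℕ) (y : ℝ), (M : ℝ) ≤ 2 * x → 1 < y →
      y ≤ x ^ (1 / 4 : ℝ) →
      ∑ r ∈ Ioc ⌊y⌋₊ M with r.Prime,
          (r : ℝ)⁻¹ * #{p ∈ residueInterval (a : ZMod r) 0 ⌊x⌋₊ | p.Prime} ≤
        832 * (x / Real.log x) / (y * Real.log y) := by
  filter_upwards [eventually_inv_mul_card_primes_residueInterval_le, eventually_gt_atTop 1]
    with x hterm hx a M y hM hy1 hyx
  have hx0 : 0 < x := one_pos.trans hx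
  have hL : 0 < Real.log x := Real.log_pos hx
  have hlogy : 0 < Real.log y := Real.log_pos hy1
  have hy0 : 0 < y := one_pos.trans hy1
  have hsqrt : y * Real.log y ≤ √x := by
    calc
      _ ≤ x ^ (1 / 4 : ℝ) * x ^ (1 / 4 : ℝ) := by
        gcongr
        exact (Real.log_le_self hy0.le).trans hyx
      _ = √x := by
        rw [Real.sqrt_eq_rpow, ← Real.rpow_add hx0]
        norm_num
  calc
    _ ≤ ∑ r ∈ Ioc ⌊y⌋₊ M with r.Prime, (98 * x / Real.log x * ((r : ℝ) ^ 2)⁻¹ +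
          if √x < r then 3 * x * ((r : ℝ) ^ 2)⁻¹ else 0) := by
      refine sum_le_sum fun r hr ↦ ?_
      obtain ⟨hrM, hr⟩ := mem_filter.mp hr
      exact hterm r a 0 hr ((Nat.cast_le.mpr (mem_Ioc.mp hrM).2).trans hM)
    _ ≤ 98 * x / Real.log x * (8 / (y * Real.log y)) + 3 * x * (8 / (√x * Real.log (√x))) := by
      rw [sum_add_distrib, ← mul_sum]
      simp only [← mul_ite_zero, ← mul_sum]
      gcongr
      · exact sum_primes_Ioc_floor_inv_sq_le hy1 M
      · exact sum_primes_Ioc_ite_inv_sq_le (Real.lt_sqrt_of_sq_lt (by simpa using hx)) _ M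
    _ = 784 * (x / Real.log x) / (y * Real.log y) + 48 * (x / Real.log x) / √x := by
      rw [Real.log_sqrt hx0.le]
      ring
    _ ≤ 784 * (x / Real.log x) / (y * Real.log y) +
          48 * (x / Real.log x) / (y * Real.log y) := by gcongr
    _ = _ := by ring

-- A prime `p = a` contributes nothing, because `hy y 0 = 0`.
theorem hy_sum_bound_general :
    ∃ C : ℝ, 0 < C ∧ ∀ᶠ x : ℝ in atTop, ∀ (a : ℤ) (y : ℝ), |(a : ℝ)| ≤ x → 1 < y →
      y ≤ x ^ (1 / 4 : ℝ) →
      ∑ p ∈ (range (⌊x⌋₊ + 1)).filter Nat.Prime, hy y ((p : ℤ) - a).natAbs ≤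
        C * Nat.primeCounting ⌊x⌋₊ / (y * Real.log y) := by
  refine ⟨1664, by norm_num, ?_⟩
  filter_upwards [eventually_sum_inv_mul_card_primes_residueInterval_le,
    eventually_div_log_le_two_mul_primeCounting, eventually_ge_atTop 0]
    with x hsum hπ hx a y hax hy1 hyx
  have hM : ((⌊x⌋₊ + a.natAbs : ℕ) : ℝ) ≤ 2 * x := by
    rw [Nat.cast_add, Nat.cast_natAbs, Int.cast_abs]
    linarith [Nat.floor_le hx]
  have hlogy : 0 < Real.log y := Real.log_pos hy1
  calc
    _ ≤ 832 * (x / Real.log x) / (y * Real.log y) :=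
      (sum_primesLE_hy_le y a ⌊x⌋₊).trans (hsum a _ y hM hy1 hyx)
    _ ≤ 832 * (2 * Nat.primeCounting ⌊x⌋₊) / (y * Real.log y) := by gcongr
    _ = _ := by ring

theorem eventually_log_log_le_rpow :
    ∀ᶠ x : ℝ in atTop, Real.log (Real.log x) ≤ x ^ (1 / 4 : ℝ) := by
  filter_upwards [(isLittleO_log_rpow_atTop (by norm_num : (0 : ℝ) < 1 / 4)).bound one_pos,
    eventually_ge_atTop 1] with x hx hx1
  rw [one_mul, Real.norm_of_nonneg (Real.log_nonneg hx1), Real.norm_of_nonneg (by positivity)] at hx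
  exact (Real.log_le_self (Real.log_nonneg hx1)).trans hx

theorem hy_sum_bound :
    ∃ C : ℝ, 0 < C ∧ ∀ᶠ x : ℝ in atTop,
      (∑ p ∈ (Finset.range (⌊x⌋₊ + 1)).filter Nat.Prime,
          hy (Real.log (Real.log x)) (p - 1)) ≤
        C * (Nat.primeCounting ⌊x⌋₊ : ℝ) /
          (Real.log (Real.log x) * Real.log (Real.log (Real.log x))) ∧
      (∑ p ∈ (Finset.range (⌊x⌋₊ + 1)).filter Nat.Prime,
          hy (Real.log (Real.log x)) (p + 1)) ≤
        C * (Nat.primeCounting ⌊x⌋₊ : ℝ) /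
          (Real.log (Real.log x) * Real.log (Real.log (Real.log x))) := by
  obtain ⟨C, hC, h⟩ := hy_sum_bound_general
  refine ⟨C, hC, ?_⟩
  filter_upwards [h, eventually_log_log_le_rpow, eventually_ge_atTop 1,
    (Real.tendsto_log_atTop.comp Real.tendsto_log_atTop).eventually_gt_atTop 1] with x h hyx hx hy1
  have hsub : ∀ p : ℕ, p.Prime → p - 1 = ((p : ℤ) - 1).natAbs := fun p hp ↦ by
    have := hp.one_lt
    lia
  refine ⟨(sum_congr rfl fun p hp ↦ ?_).trans_le (h 1 _ (by simpa using hx) hy1 hyx),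
    (sum_congr rfl fun p _ ↦ ?_).trans_le (h (-1) _ (by simpa using hx) hy1 hyx)⟩
  · rw [hsub p (mem_filter.mp hp).2]
  · rw [show p + 1 = ((p : ℤ) - (-1)).natAbs by lia]
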